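/- Let T > 0, let Ω_T = (0,1) × (0,T) and Ω̃_T = (−1,2) × (−T,2T), let u be continuous on [0,1] × [0,T] with finite parabolic BMO norm on Ω_T, and let ũ be the reflection extension of u. Set r₀ = min(1/2, (T/2)^{1/2}), r₁ = r₀/2 and r₂ = r₁/√2. Then there exists a universal constant C > 0 (independent of T and u) such that for every parabolic cube Q_r ⊆ Ω̃_T of radius r ≤ r₂, inf_{c ∈ ℝ} (1/|Q_r|) ∫_{Q_r} |ũ − c| ≤ C ‖u‖_{BMOₚ(Ω_T)}. -/

import Mathlib

open MeasureTheory Real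
open scoped ENNReal

noncomputable section

/-- The parabolic distance `‖z‖ₚ = max |x| √|t|` from `z = (x,t) ∈ ℝ²` to the origin. -/
def pnorm2 (z : ℝ × ℝ) : ℝ := max |z.1| (Real.sqrt |z.2|)

/-- The parabolic cube of radius `r` centered at `z₀` in `ℝ²`. -/
def pCube2 (z₀ : ℝ × ℝ) (r : ℝ) : Set (ℝ × ℝ) := {z | pnorm2 (z - z₀) < r}

/-- The set of mean oscillations `⨍_Q |u - u_Q|` of `u` over parabolic cubes `Q ⊆ O`. -/
def oscSet2 (O : Set (ℝ × ℝ)) (u : ℝ × ℝ → ℝ) : Set ℝ :=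
  {v | ∃ z₀ r, 0 < r ∧ pCube2 z₀ r ⊆ O ∧
    v = ⨍ z in pCube2 z₀ r, |u z - ⨍ w in pCube2 z₀ r, u w|}

/-- The parabolic BMO norm of `u` over `O ⊆ ℝ²`. -/
def pBMO2 (O : Set (ℝ × ℝ)) (u : ℝ × ℝ → ℝ) : ℝ := sSup (oscSet2 O u)

/-- `log⁺ x = max (log x) 0`. -/
def logPlus (x : ℝ) : ℝ := max (Real.log x) 0

/-- The domain `Ω_T = (0,1) × (0,T)`. -/
def Omega (T : ℝ) : Set (ℝ × ℝ) := Set.Ioo (0 : ℝ) 1 ×ˢ Set.Ioo (0 : ℝ) T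

/-- The domain `Ω̂_T = (-1,2) × (0,T)`. -/
def OmegaHat (T : ℝ) : Set (ℝ × ℝ) := Set.Ioo (-1 : ℝ) 2 ×ˢ Set.Ioo (0 : ℝ) T

/-- The domain `Ω̃_T = (-1,2) × (-T,2T)`. -/
def OmegaTilde (T : ℝ) : Set (ℝ × ℝ) := Set.Ioo (-1 : ℝ) 2 ×ˢ Set.Ioo (-T) (2 * T)

/-- The spatial reflection extension of `u` from `[0,1]` to `(-1,2)` (in the `x` variable). -/
def extSpace (u : ℝ × ℝ → ℝ) : ℝ × ℝ → ℝ := fun p =>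
  if p.1 < 0 then -3 * u (-p.1, p.2) + 4 * u (-p.1 / 2, p.2)
  else if 1 < p.1 then -3 * u (2 - p.1, p.2) + 4 * u ((3 - p.1) / 2, p.2)
  else u p

/-- The temporal reflection extension from `[0,T]` to `(-T,2T)` (in the `t` variable). -/
def extTime (T : ℝ) (v : ℝ × ℝ → ℝ) : ℝ × ℝ → ℝ := fun p =>
  if p.2 < 0 then v (p.1, -p.2)
  else if T < p.2 then v (p.1, 2 * T - p.2)
  else v p

/-- The reflection extension `ũ` of `u` from `Ω_T` to `Ω̃_T = (-1,2) × (-T,2T)`. -/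
def uext (T : ℝ) (u : ℝ × ℝ → ℝ) : ℝ × ℝ → ℝ := extTime T (extSpace u)

/-- The reflection extension `ũ`, extended by `0` outside `Ω̃_T`. -/
def uextZ (T : ℝ) (u : ℝ × ℝ → ℝ) : ℝ × ℝ → ℝ :=
  (OmegaTilde T).indicator (uext T u)

/-- The partial derivative `u_x`. -/
def Dx2 (u : ℝ × ℝ → ℝ) : ℝ × ℝ → ℝ := fun p => fderiv ℝ u p (1, 0)

/-- The partial derivative `u_t`. -/
def Dt2 (u : ℝ × ℝ → ℝ) : ℝ × ℝ → ℝ := fun p => fderiv ℝ u p (0, 1)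

/-- The `L²(O)` norm. -/
def L2norm2 (O : Set (ℝ × ℝ)) (v : ℝ × ℝ → ℝ) : ℝ :=
  (eLpNorm v 2 (volume.restrict O)).toReal

/-- The parabolic Sobolev norm
`‖u‖_{W₂^{2,1}(O)} = ‖u‖_{L²} + ‖u_x‖_{L²} + ‖u_{xx}‖_{L²} + ‖u_t‖_{L²}`. -/
def W21norm (O : Set (ℝ × ℝ)) (u : ℝ × ℝ → ℝ) : ℝ :=
  L2norm2 O u + L2norm2 O (Dx2 u) + L2norm2 O (Dx2 (Dx2 u)) + L2norm2 O (Dt2 u)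

/-!
The extension is `ũ = -3 u ∘ Φ₁ + 4 u ∘ Φ₂`, where `Φ_k` folds the plane onto `[0, 1] × [0, T]`.
Since `Φ_k` is nonexpansive in each variable, it maps a small cube `Q ⊆ Ω̃_T` into the closure of a
cube `Q' ⊆ Ω_T` of the same radius. Since it is piecewise affine, it pushes Lebesgue measure on `Q`
forward to at most `3 (1 + 2k)` times Lebesgue measure on `Q'`. Hence the mean distance on `Q` of
`u ∘ Φ_k` from the average of `u` over `Q'` is at most `3 (1 + 2k)` times the oscillation of `u`
over `Q'`, and the same combination of the two averages is the constant for `ũ`.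
-/

theorem div_mem_Icc_of_one_le {k d : ℝ} (hk : 1 ≤ k) (hd : 0 ≤ d) : d / k ∈ Set.Icc 0 d :=
  ⟨div_nonneg hd (by linarith), div_le_self hd hk⟩

theorem exists_ball_inter_Icc_subset_closedBall {a b ρ : ℝ} (m : ℝ) (hρ : 2 * ρ ≤ b - a) :
    ∃ y, Metric.ball y ρ ⊆ Set.Ioo a b ∧
      Metric.ball m ρ ∩ Set.Icc a b ⊆ Metric.closedBall y ρ := by
  refine ⟨max (a + ρ) (min m (b - ρ)), ?_, ?_⟩
  · rw [Real.ball_eq_Ioo]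
    have : max (a + ρ) (min m (b - ρ)) ≤ b - ρ := max_le (by linarith) (min_le_right _ _)
    exact Set.Ioo_subset_Ioo (by linarith [le_max_left (a + ρ) (min m (b - ρ))]) (by linarith)
  · rw [Real.ball_eq_Ioo, Real.closedBall_eq_Icc]
    rintro x ⟨⟨hmx, hxm⟩, hax, hxb⟩
    constructor <;> grind

theorem volume_preimage_add_mul {a : ℝ} (ha : a ≠ 0) (b : ℝ) (s : Set ℝ) :
    volume ((fun x => b + a * x) ⁻¹' s) = ENNReal.ofReal |a⁻¹| * volume s := by
  rw [← measure_preimage_add volume b s, ← Real.volume_preimage_mul_left ha]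
  rfl

theorem setAverage_abs_nonneg {α : Type*} [MeasurableSpace α] (μ : Measure α) (s : Set α)
    (f : α → ℝ) : 0 ≤ ⨍ x in s, |f x| ∂μ :=
  integral_nonneg fun _ => abs_nonneg _

section Pushforward

variable {α β E : Type*} [MeasurableSpace α] [MeasurableSpace β] [NormedAddCommGroup E]
  {μ : Measure α} {ν : Measure β} {φ : α → β} {f : β → E} {C : ℝ≥0∞}

theorem integrable_comp_of_map_le_smul (hC : C ≠ ∞) (hφ : AEMeasurable φ μ)
    (hmap : μ.map φ ≤ C • ν) (hf : Integrable f ν) : Integrable (fun x => f (φ x)) μ :=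
  ((hf.smul_measure hC).mono_measure hmap).comp_aemeasurable hφ

theorem integral_norm_comp_le_of_map_le_smul (hC : C ≠ ∞) (hφ : AEMeasurable φ μ)
    (hmap : μ.map φ ≤ C • ν) (hf : Integrable f ν) :
    ∫ x, ‖f (φ x)‖ ∂μ ≤ C.toReal * ∫ y, ‖f y‖ ∂ν := by
  have hfC : Integrable (fun y => ‖f y‖) (C • ν) := hf.norm.smul_measure hC
  calc ∫ x, ‖f (φ x)‖ ∂μ
      = ∫ y, ‖f y‖ ∂(μ.map φ) :=
        (integral_map hφ (hfC.mono_measure hmap).aestronglyMeasurable).symm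
    _ ≤ ∫ y, ‖f y‖ ∂(C • ν) :=
        integral_mono_measure hmap (.of_forall fun _ => norm_nonneg _) hfC
    _ = C.toReal * ∫ y, ‖f y‖ ∂ν := by rw [integral_smul_measure, smul_eq_mul]

end Pushforward

/-- The reflection of the line onto `[0, L]`: points to the left of `0` and to the right of `L` are
reflected in the nearest endpoint, their distance to it being divided by `k`. The two terms of
`ũ` are compositions of `u` with such reflections in each variable. -/
def foldMap (L k x : ℝ) : ℝ :=
  if x < 0 then -x / k else if L < x then L - (x - L) / k else x

section foldMap

variable {L k : ℝ}

theorem measurable_foldMap : Measurable (foldMap L k) :=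
  .ite measurableSet_Iio (by fun_prop) (.ite measurableSet_Ioi (by fun_prop) measurable_id)

theorem foldMap_mem_Icc {x : ℝ} (hk : 1 ≤ k) (hx : x ∈ Set.Ioo (-L) (2 * L)) :
    foldMap L k x ∈ Set.Icc 0 L := by
  obtain ⟨hxl, hxr⟩ := hx
  unfold foldMap
  split_ifs with hneg hgt
  · obtain ⟨_, _⟩ := div_mem_Icc_of_one_le hk (neg_nonneg.2 hneg.le)
    constructor <;> linarith
  · obtain ⟨_, _⟩ := div_mem_Icc_of_one_le hk (sub_nonneg.2 hgt.le)
    constructor <;> linarith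
  · constructor <;> linarith

theorem lipschitzWith_foldMap (hL : 0 ≤ L) (hk : 1 ≤ k) : LipschitzWith 1 (foldMap L k) := by
  refine LipschitzWith.of_dist_le_mul fun x y => ?_
  simp only [NNReal.coe_one, one_mul, Real.dist_eq]
  wlog hxy : x ≤ y generalizing x y
  · rw [abs_sub_comm, abs_sub_comm x y]
    exact this y x (le_of_not_ge hxy)
  have hleft := div_mem_Icc_of_one_le (d := -x) hk
  have hright := div_mem_Icc_of_one_le (d := y - L) hk
  have hdiff := div_mem_Icc_of_one_le (d := y - x) hk
  simp only [Set.mem_Icc] at hleft hright hdiff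
  unfold foldMap
  grind

theorem map_foldMap_volume_le (hk : 0 < k) :
    volume.map (foldMap L k) ≤ ENNReal.ofReal (1 + 2 * k) • volume := by
  refine Measure.le_iff.2 fun s hs => ?_
  have volume_reflection (b : ℝ) :
      volume ((fun x => b + -k⁻¹ * x) ⁻¹' s) = ENNReal.ofReal k * volume s := by
    rw [volume_preimage_add_mul (by simpa using hk.ne'), inv_neg, inv_inv, abs_neg, abs_of_pos hk]
  have preimage_subset : foldMap L k ⁻¹' s ⊆
      s ∪ ((fun x => 0 + -k⁻¹ * x) ⁻¹' s ∪ (fun x => (L + L / k) + -k⁻¹ * x) ⁻¹' s) := by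
    intro x hx
    simp only [Set.mem_preimage, foldMap] at hx
    split_ifs at hx
    · exact .inr (.inl (by rwa [Set.mem_preimage, show 0 + -k⁻¹ * x = -x / k by ring]))
    · exact .inr (.inr
        (by rwa [Set.mem_preimage, show L + L / k + -k⁻¹ * x = L - (x - L) / k by ring]))
    · exact .inl hx
  rw [Measure.map_apply measurable_foldMap hs, Measure.smul_apply, smul_eq_mul]
  calc volume (foldMap L k ⁻¹' s)
      ≤ volume s + (ENNReal.ofReal k * volume s + ENNReal.ofReal k * volume s) := by
        refine (measure_mono preimage_subset).trans ((measure_union_le _ _).trans ?_)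
        gcongr
        refine (measure_union_le _ _).trans_eq ?_
        rw [volume_reflection, volume_reflection]
    _ = ENNReal.ofReal (1 + 2 * k) * volume s := by
        rw [ENNReal.ofReal_add one_pos.le (by positivity), ENNReal.ofReal_mul two_pos.le,
          ENNReal.ofReal_one, ENNReal.ofReal_ofNat]
        ring

theorem exists_ball_map_foldMap_le {x ρ : ℝ} (hk : 1 ≤ k) (hρ : 0 < ρ) (hρL : 2 * ρ ≤ L)
    (hx : Metric.ball x ρ ⊆ Set.Ioo (-L) (2 * L)) :
    ∃ y, Metric.ball y ρ ⊆ Set.Ioo 0 L ∧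
      (volume.restrict (Metric.ball x ρ)).map (foldMap L k) ≤
        ENNReal.ofReal (1 + 2 * k) • volume.restrict (Metric.ball y ρ) := by
  obtain ⟨y, hyL, hy⟩ := exists_ball_inter_Icc_subset_closedBall (a := 0) (b := L)
    (ρ := ρ) (foldMap L k x) (by linarith)
  refine ⟨y, hyL, ?_⟩
  have mapsTo : Metric.ball x ρ ⊆ foldMap L k ⁻¹' Metric.closedBall y ρ := fun p hp =>
    hy ⟨by simpa using (lipschitzWith_foldMap (by linarith) hk).mapsTo_ball one_ne_zero x ρ hp,
      foldMap_mem_Icc hk (hx hp)⟩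
  have ball_ae_eq : Metric.ball y ρ =ᵐ[volume] Metric.closedBall y ρ := by
    rw [Real.ball_eq_Ioo, Real.closedBall_eq_Icc]
    exact Ioo_ae_eq_Icc
  calc (volume.restrict (Metric.ball x ρ)).map (foldMap L k)
      ≤ (volume.restrict (foldMap L k ⁻¹' Metric.closedBall y ρ)).map (foldMap L k) :=
        Measure.map_mono (Measure.restrict_mono mapsTo le_rfl) measurable_foldMap
    _ = (volume.map (foldMap L k)).restrict (Metric.closedBall y ρ) :=
        (Measure.restrict_map measurable_foldMap Metric.isClosed_closedBall.measurableSet).symm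
    _ ≤ (ENNReal.ofReal (1 + 2 * k) • volume).restrict (Metric.closedBall y ρ) :=
        Measure.restrict_mono subset_rfl (map_foldMap_volume_le (by linarith))
    _ = ENNReal.ofReal (1 + 2 * k) • volume.restrict (Metric.ball y ρ) := by
        rw [Measure.restrict_smul, Measure.restrict_congr_set ball_ae_eq]

end foldMap

/-- The reflection of the plane onto `[0, 1] × [0, T]`, contracting by `k` in the `x` variable and
isometric on each piece in the `t` variable. -/
def rectFold (T k : ℝ) : ℝ × ℝ → ℝ × ℝ := Prod.map (foldMap 1 k) (foldMap T 1)

theorem measurable_rectFold (T k : ℝ) : Measurable (rectFold T k) :=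
  measurable_foldMap.prodMap measurable_foldMap

theorem extSpace_eq_foldMap (u : ℝ × ℝ → ℝ) (p : ℝ × ℝ) :
    extSpace u p = -3 * u (foldMap 1 1 p.1, p.2) + 4 * u (foldMap 1 2 p.1, p.2) := by
  simp only [extSpace, foldMap]
  split_ifs
  · simp only [div_one]
  · congr 4 <;> ring
  · ring

theorem extTime_eq_foldMap (T : ℝ) (v : ℝ × ℝ → ℝ) (p : ℝ × ℝ) :
    extTime T v p = v (p.1, foldMap T 1 p.2) := by
  simp only [extTime, foldMap]
  split_ifs
  · simp only [div_one]
  · congr 2; ring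
  · rfl

theorem uext_eq_rectFold (T : ℝ) (u : ℝ × ℝ → ℝ) (p : ℝ × ℝ) :
    uext T u p = -3 * u (rectFold T 1 p) + 4 * u (rectFold T 2 p) := by
  rw [uext, extTime_eq_foldMap, extSpace_eq_foldMap]
  rfl

theorem pCube2_eq_ball_prod_ball (z : ℝ × ℝ) {r : ℝ} (hr : 0 < r) :
    pCube2 z r = Metric.ball z.1 r ×ˢ Metric.ball z.2 (r ^ 2) := by
  ext p
  simp only [pCube2, pnorm2, Set.mem_ofPred_eq, max_lt_iff, Real.sqrt_lt' hr, Set.mem_prod,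
    Metric.mem_ball, Real.dist_eq, Prod.fst_sub, Prod.snd_sub]

theorem volume_real_pCube2 (z : ℝ × ℝ) {r : ℝ} (hr : 0 < r) :
    volume.real (pCube2 z r) = 4 * r ^ 3 := by
  rw [pCube2_eq_ball_prod_ball z hr, Measure.volume_eq_prod, measureReal_prod_prod,
    Real.volume_real_ball hr.le, Real.volume_real_ball (sq_nonneg r)]
  ring

theorem exists_pCube2_map_rectFold_le {T k r : ℝ} {z : ℝ × ℝ} (hk : 1 ≤ k) (hr : 0 < r)
    (hr_space : 2 * r ≤ 1) (hr_time : 2 * r ^ 2 ≤ T) (hz : pCube2 z r ⊆ OmegaTilde T) :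
    ∃ w, pCube2 w r ⊆ Omega T ∧
      (volume.restrict (pCube2 z r)).map (rectFold T k) ≤
        ENNReal.ofReal (3 * (1 + 2 * k)) • volume.restrict (pCube2 w r) := by
  have hr2 : 0 < r ^ 2 := by positivity
  rw [pCube2_eq_ball_prod_ball z hr] at hz ⊢
  obtain ⟨hspace, htime⟩ := (Set.prod_subset_prod_iff'
    ((Metric.nonempty_ball.2 hr).prod (Metric.nonempty_ball.2 hr2))).1 hz
  obtain ⟨y, hy, hmapy⟩ := exists_ball_map_foldMap_le hk hr hr_space (by simpa using hspace)
  obtain ⟨s, hs, hmaps⟩ := exists_ball_map_foldMap_le le_rfl hr2 hr_time htime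
  refine ⟨(y, s), ?_, ?_⟩ <;> rw [pCube2_eq_ball_prod_ball _ hr]
  · exact Set.prod_mono hy hs
  rw [Measure.volume_eq_prod, ← Measure.prod_restrict, ← Measure.prod_restrict, rectFold,
    ← Measure.map_prod_map _ _ measurable_foldMap measurable_foldMap]
  refine (Measure.prod_mono hmapy hmaps).trans_eq ?_
  rw [Measure.prod_smul_left, Measure.prod_smul_right, smul_smul,
    ← ENNReal.ofReal_mul (by linarith)]
  congr 2
  ring

theorem setIntegral_abs_sub_setAverage_le {O : Set (ℝ × ℝ)} {u : ℝ × ℝ → ℝ} {w : ℝ × ℝ} {r : ℝ}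
    (hb : BddAbove (oscSet2 O u)) (hr : 0 < r) (hw : pCube2 w r ⊆ O) :
    ∫ p in pCube2 w r, |u p - ⨍ q in pCube2 w r, u q| ≤ 4 * r ^ 3 * pBMO2 O u := by
  have le_pBMO2 := le_csSup hb ⟨w, r, hr, hw, rfl⟩
  rwa [setAverage_eq, volume_real_pCube2 w hr, smul_eq_mul,
    inv_mul_le_iff₀ (by positivity)] at le_pBMO2

theorem exists_setIntegral_rectFold_sub_le {T k r : ℝ} {u : ℝ × ℝ → ℝ} {z : ℝ × ℝ}
    (hu : IntegrableOn u (Omega T)) (hb : BddAbove (oscSet2 (Omega T) u)) (hk : 1 ≤ k)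
    (hr : 0 < r) (hr_space : 2 * r ≤ 1) (hr_time : 2 * r ^ 2 ≤ T) (hz : pCube2 z r ⊆ OmegaTilde T) :
    ∃ c, IntegrableOn (fun p => u (rectFold T k p) - c) (pCube2 z r) ∧
      ∫ p in pCube2 z r, |u (rectFold T k p) - c| ≤
        3 * (1 + 2 * k) * (4 * r ^ 3 * pBMO2 (Omega T) u) := by
  obtain ⟨w, hw, hmap⟩ := exists_pCube2_map_rectFold_le hk hr hr_space hr_time hz
  have volume_ne_zero : volume.real (pCube2 w r) ≠ 0 := by
    rw [volume_real_pCube2 w hr]; positivity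
  have hint : IntegrableOn (fun p => u p - ⨍ q in pCube2 w r, u q) (pCube2 w r) :=
    (hu.mono_set hw).sub (integrableOn_const fun h => volume_ne_zero (by simp [measureReal_def, h]))
  have hφ := (measurable_rectFold T k).aemeasurable (μ := volume.restrict (pCube2 z r))
  refine ⟨⨍ q in pCube2 w r, u q,
    integrable_comp_of_map_le_smul ENNReal.ofReal_ne_top hφ hmap hint, ?_⟩
  have hle := integral_norm_comp_le_of_map_le_smul ENNReal.ofReal_ne_top hφ hmap hint
  rw [ENNReal.toReal_ofReal (by linarith)] at hle
  refine hle.trans ?_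
  gcongr
  exact setIntegral_abs_sub_setAverage_le hb hr hw

theorem small_cube_estimate_tilde_general {T r : ℝ} {u : ℝ × ℝ → ℝ} {z : ℝ × ℝ}
    (hu : IntegrableOn u (Omega T)) (hb : BddAbove (oscSet2 (Omega T) u)) (hr : 0 < r)
    (hr₀ : r ≤ min (1 / 2) √(T / 2)) (hz : pCube2 z r ⊆ OmegaTilde T) :
    (⨅ c : ℝ, ⨍ p in pCube2 z r, |uext T u p - c|) ≤ 87 * pBMO2 (Omega T) u := by
  obtain ⟨hr_half, hr_sqrt⟩ := le_min_iff.1 hr₀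
  have hr_space : 2 * r ≤ 1 := by linarith
  have hr_time : 2 * r ^ 2 ≤ T := by linarith [(Real.le_sqrt' hr).1 hr_sqrt]
  obtain ⟨c₁, hint₁, hle₁⟩ :=
    exists_setIntegral_rectFold_sub_le hu hb le_rfl hr hr_space hr_time hz
  obtain ⟨c₂, hint₂, hle₂⟩ :=
    exists_setIntegral_rectFold_sub_le hu hb one_le_two hr hr_space hr_time hz
  refine ciInf_le_of_le ⟨0, Set.forall_mem_range.2 fun c => setAverage_abs_nonneg _ _ _⟩
    (-3 * c₁ + 4 * c₂) ?_
  have abs_uext_sub_le (p : ℝ × ℝ) : |uext T u p - (-3 * c₁ + 4 * c₂)| ≤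
      3 * |u (rectFold T 1 p) - c₁| + 4 * |u (rectFold T 2 p) - c₂| := by
    rw [uext_eq_rectFold]
    grind
  rw [setAverage_eq, volume_real_pCube2 z hr, smul_eq_mul, inv_mul_le_iff₀ (by positivity)]
  calc ∫ p in pCube2 z r, |uext T u p - (-3 * c₁ + 4 * c₂)|
      ≤ ∫ p in pCube2 z r, (3 * |u (rectFold T 1 p) - c₁| + 4 * |u (rectFold T 2 p) - c₂|) :=
        integral_mono_of_nonneg (.of_forall fun _ => abs_nonneg _)
          ((hint₁.abs.const_mul 3).add (hint₂.abs.const_mul 4)) (.of_forall abs_uext_sub_le)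
    _ = 3 * (∫ p in pCube2 z r, |u (rectFold T 1 p) - c₁|) +
          4 * ∫ p in pCube2 z r, |u (rectFold T 2 p) - c₂| := by
        rw [integral_add (hint₁.abs.const_mul 3) (hint₂.abs.const_mul 4), integral_const_mul,
          integral_const_mul]
    -- `87 = 3 * 9 + 4 * 15`, the folds with `k = 1` and `k = 2` having constants `9` and `15`
    _ ≤ 4 * r ^ 3 * (87 * pBMO2 (Omega T) u) := by linarith

/-- **Estimates on small parabolic cubes in `Ω̃_T = (-1,2) × (-T,2T)`** (Lemma 3.5): for
every parabolic cube `Q_r ⊆ Ω̃_T` with `r ≤ r₂ = r₁/√2`, `r₁ = r₀/2`,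
`r₀ = min(1/2, √(T/2))`, `inf_c ⨍_{Q_r} |ũ - c| ≤ C ‖u‖_{BMOₚ(Ω_T)}` with `C` universal. -/
theorem small_cube_estimate_tilde : ∃ C : ℝ, 0 < C ∧ ∀ T : ℝ, 0 < T →
    ∀ u : ℝ × ℝ → ℝ, ContinuousOn u (Set.Icc (0 : ℝ) 1 ×ˢ Set.Icc (0 : ℝ) T) →
      BddAbove (oscSet2 (Omega T) u) →
      ∀ (z₀ : ℝ × ℝ) (r : ℝ), 0 < r →
        r ≤ (min (1 / 2) (Real.sqrt (T / 2)) / 2) / Real.sqrt 2 →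
        pCube2 z₀ r ⊆ OmegaTilde T →
        (⨅ c : ℝ, ⨍ p in pCube2 z₀ r, |uext T u p - c|) ≤ C * pBMO2 (Omega T) u := by
  refine ⟨87, by norm_num, fun T _ u hu hb z r hr hr₂ hz => ?_⟩
  have hu' : IntegrableOn u (Omega T) :=
    (hu.integrableOn_compact (isCompact_Icc.prod isCompact_Icc)).mono_set
      (Set.prod_mono Set.Ioo_subset_Icc_self Set.Ioo_subset_Icc_self)
  refine small_cube_estimate_tilde_general hu' hb hr (hr₂.trans ?_) hz
  exact (div_le_self (by positivity) (Real.one_le_sqrt.2 one_le_two)).trans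
    (half_le_self (by positivity))

end
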